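/- Let k be a field and V a finite-dimensional vector space over k. Let G be a subgroup of the group of k-linear automorphisms of V, and let J be a normal subgroup of G such that every element j of J is unipotent (i.e., j - id_V is a nilpotent endomorphism of V). Then there exists a natural number m and a chain of subspaces 0 = V_0 ≤ V_1 ≤ ⋯ ≤ V_m = V such that every element of G maps each V_i into itself, and for every j ∈ J, every i with 1 ≤ i ≤ m, and every v ∈ V_i, one has j v - v ∈ V_{i-1} (that is, J acts as the identity on each quotient V_i/V_{i-1}). -/

import Mathlib

/-!
The filtration is the ascending series of fixed points of `J`: its successive quotients are
`(V / V_i)^J`, and it is stable under everything that normalizes `J`. It reaches `V` because a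
nonzero unipotent representation has a nonzero fixed vector. Over an algebraically closed field,
such a vector lies in any simple submodule: there the operators `ρ h` span all endomorphisms by
Burnside, while `f ↦ tr ((ρ h - 1) f)` vanishes on each of them, so `ρ h = 1` by nondegeneracy of
the trace form. Fixed vectors descend from `K ⊗ V` to `V` by taking coordinates in a `k`-basis
of `K`.
-/

namespace Kolchin

open scoped TensorProduct MonoidAlgebra

open Representation

theorem lsmul_surjective_of_isSimpleModule (k A M : Type*) [Field k] [IsAlgClosed k] [Ring A]
    [Algebra k A] [AddCommGroup M] [Module k M] [Module A M] [IsScalarTower k A M]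
    [FiniteDimensional k M] [IsSimpleModule A M] :
    Function.Surjective (Algebra.lsmul k k M : A →ₐ[k] Module.End k M) := by
  intro f
  have f_comm (e : Module.End A M) (m : M) : f (e m) = e (f m) := by
    obtain ⟨c, rfl⟩ := (IsSimpleModule.algebraMap_end_bijective_of_isAlgClosed k).surjective e
    exact f.map_smul c m
  let f' : Module.End (Module.End A M) M := { f with map_smul' := f_comm }
  obtain ⟨s, hs⟩ := Module.Finite.fg_top (R := k) (M := M)
  obtain ⟨a, ha⟩ := jacobson_density f' s
  exact ⟨a, LinearMap.ext_on hs fun m hm ↦ (ha m hm).symm⟩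

theorem eq_zero_of_forall_trace_mul_eq_zero {k V : Type*} [CommRing k] [AddCommGroup V]
    [Module k V] [Module.Free k V] [Module.Finite k V] {f : Module.End k V}
    (hf : ∀ g : Module.End k V, LinearMap.trace k V (f * g) = 0) : f = 0 := by
  ext v
  rw [LinearMap.zero_apply, ← Module.forall_dual_apply_eq_zero_iff k]
  intro φ
  have mul_smulRight : f * φ.smulRight v = φ.smulRight (f v) := by
    ext w
    exact f.map_smul (φ w) v
  rw [← LinearMap.trace_smulRight, ← mul_smulRight, hf]

section Unipotent

variable {k H V : Type*} [CommRing k] [Monoid H] [AddCommGroup V] [Module k V]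

/-- A representation is unipotent if every element acts by a unipotent operator. -/
def IsUnipotent (ρ : Representation k H V) : Prop :=
  ∀ h, IsNilpotent (ρ h - 1)

variable {ρ : Representation k H V}

theorem IsUnipotent.of_injective {W : Type*} [AddCommGroup W] [Module k W]
    {σ : Representation k H W} (hσ : IsUnipotent σ) {f : V →ₗ[k] W}
    (hf : Function.Injective f) (hcomm : ∀ h, σ h ∘ₗ f = f ∘ₗ ρ h) : IsUnipotent ρ := by
  intro h
  obtain ⟨n, hn⟩ := hσ h
  have sub_one_comm : (σ h - 1) ∘ₗ f = f ∘ₗ (ρ h - 1) := by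
    rw [LinearMap.sub_comp, hcomm, LinearMap.comp_sub]
    rfl
  have comp_pow := Module.End.commute_pow_left_of_commute sub_one_comm n
  rw [hn, LinearMap.zero_comp] at comp_pow
  refine ⟨n, LinearMap.ext fun v ↦ hf ?_⟩
  rw [LinearMap.zero_apply, map_zero]
  exact (LinearMap.congr_fun comp_pow v).symm

theorem IsUnipotent.submodule {M : Type*} [AddCommGroup M] [Module k M] [Module k[H] M]
    [IsScalarTower k k[H] M] (hM : IsUnipotent (ofModule' M : Representation k H M))
    (S : Submodule k[H] M) : IsUnipotent (ofModule' S : Representation k H S) :=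
  hM.of_injective (f := S.subtype.restrictScalars k) S.subtype_injective fun _ ↦ rfl

theorem IsUnipotent.quotient (hρ : IsUnipotent ρ) (U : Submodule k V)
    (hU : ∀ h, U ≤ U.comap (ρ h)) : IsUnipotent (ρ.quotient U hU) := by
  intro h
  have hU' : U ≤ U.comap (ρ h - 1) := fun u hu ↦ U.sub_mem (hU h hu) hu
  have : ρ.quotient U hU h - 1 = U.mapQ U (ρ h - 1) hU' := by
    ext v
    rfl
  rw [this]
  exact Module.End.IsNilpotent.mapQ hU' (hρ h)

theorem asModuleEquiv_ofModule'_apply (ρ : Representation k H V) (h : H) (x : ρ.asModule) :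
    ρ.asModuleEquiv ((ofModule' ρ.asModule : Representation k H ρ.asModule) h x) =
      ρ h (ρ.asModuleEquiv x) := by
  rw [← asAlgebraHom_of ρ, ← asModuleEquiv_map_smul]
  rfl

theorem IsUnipotent.asModule (hρ : IsUnipotent ρ) :
    IsUnipotent (ofModule' ρ.asModule : Representation k H ρ.asModule) :=
  hρ.of_injective (f := ρ.asModuleEquiv.toLinearMap) ρ.asModuleEquiv.injective
    fun h ↦ LinearMap.ext fun x ↦ (asModuleEquiv_ofModule'_apply ρ h x).symm

/-- Extension of scalars of a representation along `k → K`. -/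
noncomputable def baseChange (K : Type*) [CommRing K] [Algebra k K] (ρ : Representation k H V) :
    Representation K H (K ⊗[k] V) :=
  (Module.End.baseChangeHom k K V : Module.End k V →* Module.End K (K ⊗[k] V)).comp ρ

theorem IsUnipotent.baseChange {K : Type*} [CommRing K] [Algebra k K]
    (hρ : IsUnipotent ρ) : IsUnipotent (baseChange K ρ) := by
  intro h
  have := (hρ h).map (Module.End.baseChangeHom k K V)
  rwa [map_sub, map_one] at this

end Unipotent

section IsAlgClosed

variable {k H M : Type*} [Field k] [Monoid H] [AddCommGroup M] [Module k M] [Module k[H] M]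
  [IsScalarTower k k[H] M] [IsAlgClosed k] [FiniteDimensional k M]

theorem IsUnipotent.eq_one_of_isSimpleModule [IsSimpleModule k[H] M]
    (hM : IsUnipotent (ofModule' M : Representation k H M)) (h : H) :
    (ofModule' M : Representation k H M) h = 1 := by
  let ρ : Representation k H M := ofModule' M
  have trace_apply (g : H) : LinearMap.trace k M (ρ g) = LinearMap.trace k M 1 := by
    rw [← sub_eq_zero, ← map_sub]
    exact (LinearMap.isNilpotent_trace_of_isNilpotent (hM g)).eq_zero
  have trace_mul_lsmul (a : k[H]) :
      LinearMap.trace k M ((ρ h - 1) * Algebra.lsmul k k M a) = 0 := by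
    induction a using MonoidAlgebra.induction_on with
    | of g =>
      have lsmul_of : Algebra.lsmul k k M (MonoidAlgebra.of k H g) = ρ g := rfl
      rw [lsmul_of, sub_mul, one_mul, ← map_mul, map_sub, trace_apply, trace_apply, sub_self]
    | add a b ha hb => rw [map_add, mul_add, map_add, ha, hb, add_zero]
    | smul c a ha => rw [map_smul, mul_smul_comm, map_smul, ha, smul_zero]
  refine sub_eq_zero.mp (eq_zero_of_forall_trace_mul_eq_zero fun f ↦ ?_)
  obtain ⟨a, rfl⟩ := lsmul_surjective_of_isSimpleModule k k[H] M f
  exact trace_mul_lsmul a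

theorem IsUnipotent.exists_ne_zero_forall_ofModule'_apply_eq [Nontrivial M]
    (hM : IsUnipotent (ofModule' M : Representation k H M)) :
    ∃ m : M, m ≠ 0 ∧ ∀ h, (ofModule' M : Representation k H M) h m = m := by
  have : IsArtinian k[H] M := isArtinian_of_tower k inferInstance
  obtain ⟨S, hS⟩ := IsAtomic.exists_atom (Submodule k[H] M)
  have : IsSimpleModule k[H] S := isSimpleModule_iff_isAtom.mpr hS
  have : FiniteDimensional k S :=
    .of_injective (S.subtype.restrictScalars k) S.subtype_injective
  have := IsSimpleModule.nontrivial k[H] S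
  obtain ⟨s, hs⟩ := exists_ne (0 : S)
  refine ⟨s, by simpa using hs, fun h ↦ ?_⟩
  have := LinearMap.congr_fun ((hM.submodule S).eq_one_of_isSimpleModule h) s
  exact congrArg Subtype.val this

theorem IsUnipotent.exists_ne_zero_forall_apply_eq_of_isAlgClosed {V : Type*} [AddCommGroup V]
    [Module k V] [FiniteDimensional k V] [Nontrivial V] {ρ : Representation k H V}
    (hρ : IsUnipotent ρ) : ∃ v : V, v ≠ 0 ∧ ∀ h, ρ h v = v := by
  have : Nontrivial ρ.asModule := ρ.asModuleEquiv.toEquiv.nontrivial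
  obtain ⟨x, hx, hfix⟩ := hρ.asModule.exists_ne_zero_forall_ofModule'_apply_eq
  refine ⟨ρ.asModuleEquiv x, by simpa using hx, fun h ↦ ?_⟩
  rw [← asModuleEquiv_ofModule'_apply, hfix]

end IsAlgClosed

theorem exists_ne_zero_forall_apply_eq_of_baseChange {k H V K : Type*} [CommRing k] [Monoid H]
    [AddCommGroup V] [Module k V] [CommRing K] [Algebra k K] [Module.Free k K]
    {ρ : Representation k H V}
    (hK : ∃ x : K ⊗[k] V, x ≠ 0 ∧ ∀ h, baseChange K ρ h x = x) :
    ∃ v : V, v ≠ 0 ∧ ∀ h, ρ h v = v := by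
  obtain ⟨x, hx, hfix⟩ := hK
  classical
  let b := Module.Free.chooseBasis k K
  let coord i : K ⊗[k] V →ₗ[k] V := TensorProduct.lid k V ∘ₗ (b.coord i).rTensor V
  have coord_comm i h y : coord i (baseChange K ρ h y) = ρ h (coord i y) := by
    have : coord i ∘ₗ (ρ h).lTensor K = ρ h ∘ₗ coord i := by
      ext c v
      simp [coord]
    exact LinearMap.congr_fun this y
  obtain ⟨i, hi⟩ : ∃ i, coord i x ≠ 0 := by
    by_contra! h
    refine hx ((TensorProduct.equivFinsuppOfBasisLeft b).map_eq_zero_iff.mp ?_)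
    refine Finsupp.ext fun i ↦ ?_
    rw [TensorProduct.equivFinsuppOfBasisLeft_apply]
    exact h i
  exact ⟨coord i x, hi, fun h ↦ by rw [← coord_comm, hfix]⟩

section FixedSeries

variable {k H V : Type*} [CommRing k] [Monoid H] [AddCommGroup V] [Module k V]

/-- The ascending series of fixed points of a representation, which starts at `⊥` and whose
`(n + 1)`-st term consists of the vectors that are fixed modulo the `n`-th term. -/
def fixedSeries (ρ : Representation k H V) : ℕ → Submodule k V
  | 0 => ⊥
  | n + 1 => ⨅ h, (fixedSeries ρ n).comap (ρ h - 1)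

theorem mem_fixedSeries_succ {ρ : Representation k H V} {n : ℕ} {v : V} :
    v ∈ fixedSeries ρ (n + 1) ↔ ∀ h, ρ h v - v ∈ fixedSeries ρ n := by
  simp [fixedSeries]

variable (ρ : Representation k H V)

theorem fixedSeries_le_comap_of_comp_eq {f : V →ₗ[k] V}
    (hf : ∀ h, ∃ h', ρ h ∘ₗ f = f ∘ₗ ρ h') (n : ℕ) :
    fixedSeries ρ n ≤ (fixedSeries ρ n).comap f := by
  induction n with
  | zero => exact bot_le
  | succ n ih =>
    intro v hv
    rw [Submodule.mem_comap, mem_fixedSeries_succ]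
    intro h
    obtain ⟨h', hh'⟩ := hf h
    have : ρ h (f v) - f v = f (ρ h' v - v) := by
      rw [map_sub, ← LinearMap.comp_apply, hh', LinearMap.comp_apply]
    rw [this]
    exact ih (mem_fixedSeries_succ.mp hv h')

theorem monotone_fixedSeries : Monotone (fixedSeries ρ) := by
  refine monotone_nat_of_le_succ fun n ↦ ?_
  induction n with
  | zero => exact bot_le
  | succ n ih =>
    intro v hv
    rw [mem_fixedSeries_succ] at hv ⊢
    exact fun h ↦ ih (hv h)

theorem fixedSeries_le_comap (n : ℕ) (h : H) :
    fixedSeries ρ n ≤ (fixedSeries ρ n).comap (ρ h) := by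
  intro v hv
  have : ρ h v - v ∈ fixedSeries ρ n :=
    mem_fixedSeries_succ.mp (monotone_fixedSeries ρ n.le_succ hv) h
  simpa using add_mem this hv

end FixedSeries

section FiniteDimensional

variable {k H V : Type*} [Field k] [Monoid H] [AddCommGroup V] [Module k V]
  [FiniteDimensional k V] {ρ : Representation k H V}

theorem IsUnipotent.exists_ne_zero_forall_apply_eq [Nontrivial V]
    (hρ : IsUnipotent ρ) : ∃ v : V, v ≠ 0 ∧ ∀ h, ρ h v = v := by
  apply exists_ne_zero_forall_apply_eq_of_baseChange (K := AlgebraicClosure k)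
  exact hρ.baseChange.exists_ne_zero_forall_apply_eq_of_isAlgClosed

theorem IsUnipotent.fixedSeries_eq_top_of_succ_le (hρ : IsUnipotent ρ) {n : ℕ}
    (hn : fixedSeries ρ (n + 1) ≤ fixedSeries ρ n) : fixedSeries ρ n = ⊤ := by
  by_contra hne
  have := Submodule.Quotient.nontrivial_iff.mpr hne
  obtain ⟨w, hw, hfix⟩ :=
    (hρ.quotient _ (fixedSeries_le_comap ρ n)).exists_ne_zero_forall_apply_eq
  obtain ⟨v, rfl⟩ := Submodule.mkQ_surjective _ w
  refine hw ((Submodule.Quotient.mk_eq_zero _).mpr (hn ?_))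
  rw [mem_fixedSeries_succ]
  exact fun h ↦ (Submodule.Quotient.eq _).mp (hfix h)

theorem IsUnipotent.exists_fixedSeries_eq_top (hρ : IsUnipotent ρ) :
    ∃ n, fixedSeries ρ n = ⊤ := by
  obtain ⟨n, hn⟩ :=
    WellFoundedGT.monotone_chain_condition ⟨fixedSeries ρ, monotone_fixedSeries ρ⟩
  exact ⟨n, hρ.fixedSeries_eq_top_of_succ_le (hn (n + 1) n.le_succ).ge⟩

end FiniteDimensional

end Kolchin

/-- Let `k` be a field and `V` a finite-dimensional vector space over `k`.
Let `G` be a subgroup of the group of `k`-linear automorphisms of `V`, and `J` a normal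
subgroup of `G` consisting of unipotent automorphisms.  Then there is a chain of subspaces
`0 = V_0 ≤ V_1 ≤ ⋯ ≤ V_m = V` preserved by `G` such that `J` acts as the identity on each
successive quotient. -/
theorem stmt_0 (k : Type*) [Field k] (V : Type*) [AddCommGroup V] [Module k V]
    [FiniteDimensional k V]
    (G J : Subgroup (V ≃ₗ[k] V)) (hJG : J ≤ G)
    (hnormal : ∀ g ∈ G, ∀ j ∈ J, g * j * g⁻¹ ∈ J)
    (hunip : ∀ j ∈ J, IsNilpotent ((j : V →ₗ[k] V) - LinearMap.id)) :
    ∃ (m : ℕ) (W : ℕ → Submodule k V),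
      W 0 = ⊥ ∧ W m = ⊤ ∧ (∀ i : ℕ, W i ≤ W (i + 1)) ∧
      (∀ g ∈ G, ∀ i : ℕ, ∀ v ∈ W i, g v ∈ W i) ∧
      (∀ j ∈ J, ∀ i : ℕ, i < m → ∀ v ∈ W (i + 1), j v - v ∈ W i) := by
  let ρ : Representation k J V :=
    (LinearEquiv.automorphismGroup.toLinearMapMonoidHom (R := k) (M := V)).comp J.subtype
  have hρ : Kolchin.IsUnipotent ρ := fun j ↦ hunip j j.2
  have G_normalizes (g) (hg : g ∈ G) (j : J) :
      ∃ j' : J, ρ j ∘ₗ (g : V →ₗ[k] V) = (g : V →ₗ[k] V) ∘ₗ ρ j' := by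
    refine ⟨⟨g⁻¹ * j * g, by simpa using hnormal g⁻¹ (inv_mem hg) j j.2⟩, ?_⟩
    ext v
    exact (g.apply_symm_apply _).symm
  obtain ⟨m, hm⟩ := hρ.exists_fixedSeries_eq_top
  exact ⟨m, Kolchin.fixedSeries ρ, rfl, hm,
    fun i ↦ Kolchin.monotone_fixedSeries ρ i.le_succ,
    fun g hg i _ hv ↦ Kolchin.fixedSeries_le_comap_of_comp_eq ρ (G_normalizes g hg) i hv,
    fun j hj _ _ _ hv ↦ Kolchin.mem_fixedSeries_succ.mp hv ⟨j, hj⟩⟩
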